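/- Let Q be the quadratic form on ℝ⁵ (functions Fin 5 → ℝ) given by Q x = −(x 0)^2 − (x 1)^2 + (x 2)^2 − (x 3)^2 + (x 4)^2. Then there exists an ℝ-algebra homomorphism from CliffordAlgebra Q to Matrix (Fin 2) (Fin 2) (Matrix (Fin 2) (Fin 2) (ℂ × ℂ)) sending the images ι(b k) of the standard basis vectors to E 1, E 2, E 3, E 4, E 5 respectively. -/

import Mathlib

/-- The bicomplex unit `i := (Complex.I, Complex.I)`. -/
def bcI : ℂ × ℂ := (Complex.I, Complex.I)

/-- The bicomplex unit `j := (Complex.I, -Complex.I)`. -/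
def bcJ : ℂ × ℂ := (Complex.I, -Complex.I)

/-- Minkowski paravector generator `e₁ := !![i, 0; 0, -i]`. -/
def mink1 : Matrix (Fin 2) (Fin 2) (ℂ × ℂ) := !![bcI, 0; 0, -bcI]

/-- Minkowski paravector generator `e₂ := !![0, i; i, 0]`. -/
def mink2 : Matrix (Fin 2) (Fin 2) (ℂ × ℂ) := !![0, bcI; bcI, 0]

/-- Minkowski paravector generator `e₃ := !![0, j; -j, 0]`. -/
def mink3 : Matrix (Fin 2) (Fin 2) (ℂ × ℂ) := !![0, bcJ; -bcJ, 0]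

/-- Ambient-space generator `E 1 := !![e₁, 0; 0, -e₁]`. -/
def ads1 : Matrix (Fin 2) (Fin 2) (Matrix (Fin 2) (Fin 2) (ℂ × ℂ)) :=
  !![mink1, 0; 0, -mink1]

/-- Ambient-space generator `E 2 := !![e₂, 0; 0, -e₂]`. -/
def ads2 : Matrix (Fin 2) (Fin 2) (Matrix (Fin 2) (Fin 2) (ℂ × ℂ)) :=
  !![mink2, 0; 0, -mink2]

/-- Ambient-space generator `E 3 := !![e₃, 0; 0, -e₃]`. -/
def ads3 : Matrix (Fin 2) (Fin 2) (Matrix (Fin 2) (Fin 2) (ℂ × ℂ)) :=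
  !![mink3, 0; 0, -mink3]

/-- Ambient-space generator `E 4 := !![0, i•1; i•1, 0]`. -/
def ads4 : Matrix (Fin 2) (Fin 2) (Matrix (Fin 2) (Fin 2) (ℂ × ℂ)) :=
  !![0, bcI • 1; bcI • 1, 0]

/-- Ambient-space generator `E 5 := !![0, j•1; -(j•1), 0]`. -/
def ads5 : Matrix (Fin 2) (Fin 2) (Matrix (Fin 2) (Fin 2) (ℂ × ℂ)) :=
  !![0, bcJ • 1; -(bcJ • 1), 0]

/-!
The square of a linear combination of pairwise anticommuting elements has no cross terms, so such a
family with scalar squares represents the Clifford algebra of a diagonal form. Passing from `A` to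
`2 × 2` matrices over `A` preserves this property when the old generators `e k` become
`!![e k, 0; 0, -e k]`. If `c` and `d` commute with each other and with every `e k`, the matrices
`!![0, c; c, 0]` and `!![0, d; -d, 0]` anticommute with these and with each other, and their squares
are `c²` and `-d²`. With `c = i` and `d = j`, both of square `-1`, two such steps lead from the
single generator `i` of signature `(-)` through Minkowski space `(-, -, +)` to the ambient space
`(-, -, +, -, +)`.
-/

theorem sum_mul_self_of_pairwise_anticommute {ι A : Type*} [NonUnitalNonAssocSemiring A]
    {s : Finset ι} {a : ι → A}
    (ha : (s : Set ι).Pairwise fun i j => a i * a j + a j * a i = 0) :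
    (∑ i ∈ s, a i) * ∑ i ∈ s, a i = ∑ i ∈ s, a i * a i := by
  classical
  induction s using Finset.induction_on with
  | empty => simp
  | insert k s hk ih =>
    have cross : a k * ∑ i ∈ s, a i + (∑ i ∈ s, a i) * a k = 0 := by
      rw [Finset.mul_sum, Finset.sum_mul, ← Finset.sum_add_distrib]
      exact Finset.sum_eq_zero fun i hi =>
        ha (by simp) (by simp [hi]) (ne_of_mem_of_not_mem hi hk).symm
    rw [Finset.sum_insert hk, Finset.sum_insert hk, ← ih (ha.mono (by simp))]
    calc (a k + ∑ i ∈ s, a i) * (a k + ∑ i ∈ s, a i)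
        = a k * a k + (a k * ∑ i ∈ s, a i + (∑ i ∈ s, a i) * a k)
          + (∑ i ∈ s, a i) * ∑ i ∈ s, a i := by
          simp only [mul_add, add_mul]; abel
      _ = a k * a k + (∑ i ∈ s, a i) * ∑ i ∈ s, a i := by rw [cross, add_zero]

/-- A family of Clifford generators: pairwise anticommuting elements `e i` of an `R`-algebra whose
squares are the scalars `w i`. They are not asked to generate the algebra or to be independent. -/
structure IsCliffordFamily {ι R A : Type*} [CommSemiring R] [Semiring A] [Algebra R A]
    (w : ι → R) (e : ι → A) : Prop where
  mul_self : ∀ i, e i * e i = algebraMap R A (w i)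
  anticommute : Pairwise fun i j => e i * e j + e j * e i = 0

/-- The conformal compactification of a family of generators over `A`, giving generators over the
`2 × 2` matrices. The two new directions are placed last and are built from `c` and `d`, which stand
for the bicomplex units `i` and `j`. -/
def conformalFamily {A : Type*} [Zero A] [Neg A] {n : ℕ} (e : Fin n → A) (c d : A) :
    Fin (n + 2) → Matrix (Fin 2) (Fin 2) A :=
  Fin.append (fun k => !![e k, 0; 0, -e k]) ![!![0, c; c, 0], !![0, d; -d, 0]]

namespace IsCliffordFamily

section Lift

variable {ι R A : Type*} [Fintype ι] [CommRing R] [Semiring A] [Algebra R A]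
  {w : ι → R} {e : ι → A}

theorem linearCombination_mul_self (he : IsCliffordFamily w e) (x : ι → R) :
    Fintype.linearCombination R e x * Fintype.linearCombination R e x =
      algebraMap R A (QuadraticMap.weightedSumSquares R w x) := by
  have anti : Pairwise fun i j => x i • e i * x j • e j + x j • e j * x i • e i = 0 :=
    fun i j hij => by
      beta_reduce
      rw [smul_mul_smul_comm, smul_mul_smul_comm, mul_comm (x j), ← smul_add,
        he.anticommute hij, smul_zero]
  rw [Fintype.linearCombination_apply, sum_mul_self_of_pairwise_anticommute (anti.set_pairwise _),
    QuadraticMap.weightedSumSquares_apply, map_sum]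
  refine Finset.sum_congr rfl fun i _ => ?_
  rw [smul_mul_smul_comm, he.mul_self, smul_eq_mul, mul_comm (w i), map_mul, Algebra.smul_def]

/-- The representation of the Clifford algebra of a diagonal quadratic form given by a family of
Clifford generators, as the images of the standard basis vectors. -/
def lift (he : IsCliffordFamily w e) :
    CliffordAlgebra (QuadraticMap.weightedSumSquares R w) →ₐ[R] A :=
  CliffordAlgebra.lift _ ⟨Fintype.linearCombination R e, he.linearCombination_mul_self⟩

theorem lift_ι_single [DecidableEq ι] (he : IsCliffordFamily w e) (i : ι) :
    he.lift (CliffordAlgebra.ι _ (Pi.single i 1)) = e i := by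
  rw [lift, CliffordAlgebra.lift_ι_apply, Fintype.linearCombination_apply_single, one_smul]

end Lift

section Append

variable {R A : Type*} [CommSemiring R] [Semiring A] [Algebra R A]

theorem singleton {r : R} {a : A} (ha : a * a = algebraMap R A r) :
    IsCliffordFamily ![r] ![a] where
  mul_self := by simpa using ha
  anticommute _ _ hij := (hij (Subsingleton.elim _ _)).elim

theorem append {m n : ℕ} {v : Fin m → R} {w : Fin n → R} {a : Fin m → A} {b : Fin n → A}
    (ha : IsCliffordFamily v a) (hb : IsCliffordFamily w b)
    (hab : ∀ i j, a i * b j + b j * a i = 0) :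
    IsCliffordFamily (Fin.append v w) (Fin.append a b) where
  mul_self i := by
    cases i using Fin.addCases with
    | left i => simpa using ha.mul_self i
    | right i => simpa using hb.mul_self i
  anticommute i j hij := by
    cases i using Fin.addCases with
    | left i =>
      cases j using Fin.addCases with
      | left j => simpa using ha.anticommute (ne_of_apply_ne _ hij)
      | right j => simpa using hab i j
    | right i =>
      cases j using Fin.addCases with
      | left j => simpa [add_comm] using hab j i
      | right j => simpa using hb.anticommute (ne_of_apply_ne _ hij)

end Append

section Conformal

variable {A : Type*} [Ring A]

theorem diagonal {ι R : Type*} [CommSemiring R] [Algebra R A] {w : ι → R} {e : ι → A}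
    (he : IsCliffordFamily w e) :
    IsCliffordFamily w fun k => !![e k, 0; 0, -e k] where
  mul_self k := by
    simp [he.mul_self, Matrix.algebraMap_eq_diagonal, Matrix.diagonal_fin_two]
  anticommute k l hkl := by
    simp [he.anticommute hkl, ← Matrix.of_zero]

variable {R : Type*} [CommRing R] [Algebra R A]

theorem antidiagonal_pair {r s : R} {c d : A} (hc : c * c = algebraMap R A r)
    (hd : d * d = algebraMap R A s) (hcd : Commute c d) :
    IsCliffordFamily ![r, -s] ![!![0, c; c, 0], !![0, d; -d, 0]] where
  mul_self k := by
    fin_cases k <;>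
      simp [hc, hd, Matrix.algebraMap_eq_diagonal, Matrix.diagonal_fin_two]
  anticommute k l hkl := by
    fin_cases k <;> fin_cases l <;> first
      | exact absurd rfl hkl
      | simp [hcd.eq, ← Matrix.of_zero]

theorem conformal {n : ℕ} {w : Fin n → R} {e : Fin n → A} {r s : R} {c d : A}
    (he : IsCliffordFamily w e) (hc : c * c = algebraMap R A r) (hd : d * d = algebraMap R A s)
    (hcd : Commute c d) (hce : ∀ k, Commute c (e k)) (hde : ∀ k, Commute d (e k)) :
    IsCliffordFamily (Fin.append w ![r, -s]) (conformalFamily e c d) :=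
  he.diagonal.append (antidiagonal_pair hc hd hcd) fun k l => by
    fin_cases l
    · simp [(hce k).eq, ← Matrix.of_zero]
    · simp [(hde k).eq, ← Matrix.of_zero]

end Conformal

end IsCliffordFamily

theorem bcI_mul_self : bcI * bcI = -1 := by
  simp [bcI, Prod.ext_iff]

theorem bcJ_mul_self : bcJ * bcJ = -1 := by
  simp [bcJ, Prod.ext_iff]

theorem mink_eq_conformalFamily :
    ![mink1, mink2, mink3] = conformalFamily ![bcI] bcI bcJ := by
  ext1 k
  fin_cases k <;> rfl

theorem ads_eq_conformalFamily :
    ![ads1, ads2, ads3, ads4, ads5] =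
      conformalFamily ![mink1, mink2, mink3] (bcI • 1) (bcJ • 1) := by
  ext1 k
  fin_cases k <;> rfl

theorem isCliffordFamily_mink :
    IsCliffordFamily (![-1, -1, 1] : Fin 3 → ℝ) ![mink1, mink2, mink3] := by
  have hI : bcI * bcI = algebraMap ℝ (ℂ × ℂ) (-1) := by rw [bcI_mul_self, map_neg, map_one]
  have hJ : bcJ * bcJ = algebraMap ℝ (ℂ × ℂ) (-1) := by rw [bcJ_mul_self, map_neg, map_one]
  have signature : Fin.append ![-1] ![-1, - -1] = (![-1, -1, 1] : Fin 3 → ℝ) := by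
    rw [neg_neg]
    ext1 k
    fin_cases k <;> rfl
  rw [mink_eq_conformalFamily, ← signature]
  exact (IsCliffordFamily.singleton hI).conformal hI hJ (Commute.all _ _)
    (fun _ => Commute.all _ _) (fun _ => Commute.all _ _)

theorem isCliffordFamily_ads :
    IsCliffordFamily (![-1, -1, 1, -1, 1] : Fin 5 → ℝ) ![ads1, ads2, ads3, ads4, ads5] := by
  let M := Matrix (Fin 2) (Fin 2) (ℂ × ℂ)
  have hI : (bcI • 1 : M) * bcI • 1 = algebraMap ℝ M (-1) := by
    rw [smul_mul_smul_comm, bcI_mul_self, mul_one, neg_one_smul, map_neg, map_one]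
  have hJ : (bcJ • 1 : M) * bcJ • 1 = algebraMap ℝ M (-1) := by
    rw [smul_mul_smul_comm, bcJ_mul_self, mul_one, neg_one_smul, map_neg, map_one]
  have scalar_commute (z : ℂ × ℂ) (a : M) : Commute (z • 1) a := (Commute.one_left a).smul_left z
  have signature : Fin.append ![-1, -1, 1] ![-1, - -1] = (![-1, -1, 1, -1, 1] : Fin 5 → ℝ) := by
    rw [neg_neg]
    ext1 k
    fin_cases k <;> rfl
  rw [ads_eq_conformalFamily, ← signature]
  exact isCliffordFamily_mink.conformal hI hJ (scalar_commute _ _)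
    (fun _ => scalar_commute _ _) (fun _ => scalar_commute _ _)

/-- for the quadratic form
`Q x = -(x 0)² - (x 1)² + (x 2)² - (x 3)² + (x 4)²` on `ℝ⁵` there is an
ℝ-algebra homomorphism from `CliffordAlgebra Q` to
`Matrix (Fin 2) (Fin 2) (Matrix (Fin 2) (Fin 2) (ℂ × ℂ))` sending the images
`ι (Pi.single k 1)` of the standard basis vectors to `E 1, …, E 5`. -/
theorem adS_cliffordHom
    (Q : QuadraticForm ℝ (Fin 5 → ℝ))
    (hQ : ∀ x, Q x = -(x 0) ^ 2 - (x 1) ^ 2 + (x 2) ^ 2 - (x 3) ^ 2 + (x 4) ^ 2) :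
    ∃ f : CliffordAlgebra Q →ₐ[ℝ] Matrix (Fin 2) (Fin 2) (Matrix (Fin 2) (Fin 2) (ℂ × ℂ)),
      f (CliffordAlgebra.ι Q (Pi.single 0 1)) = ads1 ∧
      f (CliffordAlgebra.ι Q (Pi.single 1 1)) = ads2 ∧
      f (CliffordAlgebra.ι Q (Pi.single 2 1)) = ads3 ∧
      f (CliffordAlgebra.ι Q (Pi.single 3 1)) = ads4 ∧
      f (CliffordAlgebra.ι Q (Pi.single 4 1)) = ads5 := by
  obtain rfl : Q = QuadraticMap.weightedSumSquares ℝ (![-1, -1, 1, -1, 1] : Fin 5 → ℝ) := by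
    ext x
    simp only [hQ, QuadraticMap.weightedSumSquares_apply, Fin.sum_univ_five, Matrix.cons_val,
      smul_eq_mul]
    ring
  have h := isCliffordFamily_ads
  exact ⟨h.lift, h.lift_ι_single 0, h.lift_ι_single 1, h.lift_ι_single 2, h.lift_ι_single 3,
    h.lift_ι_single 4⟩
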